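/- Let X be a hereditarily indecomposable metrizable continuum with metric ρ, and suppose {(A₀, B₀), (A₁, B₁)} is an essential family in X such that ρ(x, y) > 1 whenever x ∈ Aᵢ and y ∈ Bᵢ for i = 0, 1. Let 𝒩 be a finite pairwise disjoint collection of closed subsets of X, each of diameter at most 1/2. Then there is a subcontinuum of X of diameter at least 1 that is disjoint from every member of 𝒩. -/

import Mathlib

open Set

/-- A space is *hereditarily indecomposable* if whenever two subcontinua
(nonempty compact connected subsets) intersect, one is contained in the other. -/
def HereditarilyIndecomposable (X : Type*) [TopologicalSpace X] : Prop :=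
  ∀ C D : Set X, IsCompact C → IsConnected C → IsCompact D → IsConnected D →
    (C ∩ D).Nonempty → C ⊆ D ∨ D ⊆ C

/-- `L` is a partition between `A` and `B`: a closed set whose complement is the
union of two disjoint open sets containing `A` and `B` respectively. -/
def IsPartitionBetween {X : Type*} [TopologicalSpace X] (L A B : Set X) : Prop :=
  IsClosed L ∧ ∃ U V : Set X, IsOpen U ∧ IsOpen V ∧ Disjoint U V ∧
    A ⊆ U ∧ B ⊆ V ∧ Lᶜ = U ∪ V

/-- A family of pairs of disjoint closed sets is *essential* if every choice of
partitions between the pairs has nonempty intersection. -/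
def IsEssentialFamily {X : Type*} [TopologicalSpace X] {I : Type*} (A B : I → Set X) : Prop :=
  (∀ i, IsClosed (A i)) ∧ (∀ i, IsClosed (B i)) ∧ (∀ i, Disjoint (A i) (B i)) ∧
    ∀ L : I → Set X, (∀ i, IsPartitionBetween (L i) (A i) (B i)) → (⋂ i, L i).Nonempty

/-!
A small set meeting `A₀` is too far from `B₀` to meet it, so there is a partition `L` between
`A₀` and `B₀` that misses every member of `𝒩`: put the members that meet `A₀` on the side of `A₀`
and the others on the side of `B₀`. Some component of `L` meets both `A₁` and `B₁`, and is therefore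
large: otherwise `L` splits into two disjoint closed parts, one missing `B₁` and the other missing
`A₁`, so some partition between `A₁` and `B₁` misses `L`, against essentiality.
-/

theorem exists_isClopen_separating_of_notMem_connectedComponent
    {Y : Type*} [TopologicalSpace Y] [CompactSpace Y] [T2Space Y]
    {P Q : Set Y} (hP : IsClosed P) (hQ : IsClosed Q)
    (h : ∀ p ∈ P, ∀ q ∈ Q, q ∉ connectedComponent p) :
    ∃ Z : Set Y, IsClopen Z ∧ P ⊆ Z ∧ Disjoint Z Q := by
  -- The space of components is compact, Hausdorff and totally disconnected, so it suffices to
  -- separate the images of `P` and `Q` there.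
  let π : Y → ConnectedComponents Y := ConnectedComponents.mk
  have hπ : Continuous π := ConnectedComponents.continuous_coe
  have hPQ : π '' P ⊆ (π '' Q)ᶜ := by
    rintro _ ⟨p, hp, rfl⟩ ⟨q, hq, hqp⟩
    exact h p hp q hq (ConnectedComponents.coe_eq_coe'.1 hqp)
  obtain ⟨D, hD, hPD, hDQ⟩ := exists_clopen_of_closed_subset_open
    (hπ.isClosedMap P hP) (hπ.isClosedMap Q hQ).isOpen_compl hPQ
  exact ⟨π ⁻¹' D, hD.preimage hπ, image_subset_iff.1 hPD,
    disjoint_left.2 fun q hqD hqQ ↦ hDQ hqD (mem_image_of_mem π hqQ)⟩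

theorem exists_isClosed_split_of_forall_isConnected_disjoint
    {X : Type*} [TopologicalSpace X] [T2Space X] {K A B : Set X}
    (hK : IsCompact K) (hA : IsClosed A) (hB : IsClosed B)
    (h : ∀ C ⊆ K, IsCompact C → IsConnected C → (A ∩ C).Nonempty → Disjoint B C) :
    ∃ P Q : Set X, IsClosed P ∧ IsClosed Q ∧ Disjoint P Q ∧ P ∪ Q = K ∧
      Disjoint A Q ∧ Disjoint B P := by
  have : CompactSpace K := isCompact_iff_compactSpace.1 hK
  let incl : K → X := Subtype.val
  have hincl : Continuous incl := continuous_subtype_val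
  have hcomponent : ∀ p ∈ incl ⁻¹' A, ∀ q ∈ incl ⁻¹' B, q ∉ connectedComponent p := by
    intro p hp q hq hpq
    refine disjoint_left.1 (h (incl '' connectedComponent p) (Subtype.coe_image_subset K _)
      (isClosed_connectedComponent.isCompact.image hincl)
      (isConnected_connectedComponent.image incl hincl.continuousOn)
      ⟨p, hp, mem_image_of_mem incl mem_connectedComponent⟩) hq (mem_image_of_mem incl hpq)
  obtain ⟨Z, hZ, hAZ, hZB⟩ :=
    exists_isClopen_separating_of_notMem_connectedComponent
      (hA.preimage hincl) (hB.preimage hincl) hcomponent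
  refine ⟨incl '' Z, incl '' Zᶜ,
    hincl.isClosedMap Z hZ.isClosed, hincl.isClosedMap Zᶜ hZ.compl.isClosed,
    (disjoint_image_iff Subtype.val_injective).2 disjoint_compl_right, ?_, ?_, ?_⟩
  · rw [← image_union, union_compl_self, image_univ, Subtype.range_coe]
  · rw [disjoint_left]
    rintro _ hzA ⟨z, hz, rfl⟩
    exact hz (hAZ hzA)
  · rw [disjoint_left]
    rintro _ hzB ⟨z, hz, rfl⟩
    exact disjoint_left.1 hZB hz hzB

theorem exists_isPartitionBetween {X : Type*} [TopologicalSpace X] [NormalSpace X]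
    {A B : Set X} (hA : IsClosed A) (hB : IsClosed B) (h : Disjoint A B) :
    ∃ L, IsPartitionBetween L A B := by
  obtain ⟨U, V, hU, hV, hAU, hBV, hUV⟩ := normal_separation hA hB h
  exact ⟨(U ∪ V)ᶜ, (hU.union hV).isClosed_compl, U, V, hU, hV, hUV, hAU, hBV, compl_compl _⟩

namespace IsPartitionBetween

variable {X : Type*} [TopologicalSpace X] {L A B A' B' : Set X}

theorem mono (h : IsPartitionBetween L A B) (hA : A' ⊆ A) (hB : B' ⊆ B) :
    IsPartitionBetween L A' B' := by
  obtain ⟨hL, U, V, hU, hV, hUV, hAU, hBV, hLUV⟩ := h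
  exact ⟨hL, U, V, hU, hV, hUV, hA.trans hAU, hB.trans hBV, hLUV⟩

theorem disjoint_union (h : IsPartitionBetween L A B) : Disjoint L (A ∪ B) := by
  obtain ⟨-, U, V, -, -, -, hAU, hBV, hLUV⟩ := h
  rw [← subset_compl_iff_disjoint_left, hLUV]
  exact union_subset_union hAU hBV

end IsPartitionBetween

theorem exists_isPartitionBetween_disjoint_union {X : Type*} [TopologicalSpace X] [NormalSpace X]
    {A B P Q : Set X} (hA : IsClosed A) (hB : IsClosed B) (hP : IsClosed P) (hQ : IsClosed Q)
    (hAB : Disjoint A B) (hPQ : Disjoint P Q) (hAQ : Disjoint A Q) (hBP : Disjoint B P) :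
    ∃ L, IsPartitionBetween L A B ∧ Disjoint L (P ∪ Q) := by
  have hdisj : Disjoint (A ∪ P) (B ∪ Q) :=
    (hAB.union_right hAQ).union_left (hBP.symm.union_right hPQ)
  obtain ⟨L, hL⟩ := exists_isPartitionBetween (hA.union hP) (hB.union hQ) hdisj
  exact ⟨L, hL.mono subset_union_left subset_union_left,
    hL.disjoint_union.mono_right (union_subset_union subset_union_right subset_union_right)⟩

theorem exists_isPartitionBetween_disjoint_sUnion {X : Type*} [TopologicalSpace X] [NormalSpace X]
    {A B : Set X} (hA : IsClosed A) (hB : IsClosed B) (hAB : Disjoint A B)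
    {𝒩 : Set (Set X)} (hfin : 𝒩.Finite) (hclosed : ∀ N ∈ 𝒩, IsClosed N)
    (hdisj : 𝒩.PairwiseDisjoint id) (hsep : ∀ N ∈ 𝒩, (A ∩ N).Nonempty → Disjoint B N) :
    ∃ L, IsPartitionBetween L A B ∧ Disjoint L (⋃₀ 𝒩) := by
  let 𝒮 : Set (Set X) := {N ∈ 𝒩 | (A ∩ N).Nonempty}
  have hclosed_sUnion : ∀ ℳ ⊆ 𝒩, IsClosed (⋃₀ ℳ) := by
    intro ℳ hℳ
    rw [sUnion_eq_biUnion]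
    exact (hfin.subset hℳ).isClosed_biUnion fun N hN ↦ hclosed N (hℳ hN)
  have hpieces : Disjoint (⋃₀ 𝒮) (⋃₀ (𝒩 \ 𝒮)) :=
    disjoint_sUnion_left.2 fun N hN ↦ disjoint_sUnion_right.2 fun M hM ↦
      hdisj hN.1 hM.1 fun hNM ↦ hM.2 (hNM ▸ hN)
  have hA_rest : Disjoint A (⋃₀ (𝒩 \ 𝒮)) := disjoint_sUnion_right.2 fun N hN ↦
    not_not.1 fun hAN ↦ hN.2 ⟨hN.1, not_disjoint_iff_nonempty_inter.1 hAN⟩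
  have hB_meeting : Disjoint B (⋃₀ 𝒮) := disjoint_sUnion_right.2 fun N hN ↦ hsep N hN.1 hN.2
  obtain ⟨L, hL, hL𝒩⟩ := exists_isPartitionBetween_disjoint_union hA hB
    (hclosed_sUnion 𝒮 (sep_subset _ _)) (hclosed_sUnion _ sdiff_subset) hAB hpieces hA_rest
    hB_meeting
  rw [← sUnion_union, union_sdiff_cancel (sep_subset _ _)] at hL𝒩
  exact ⟨L, hL, hL𝒩⟩

namespace IsEssentialFamily

variable {X : Type*} [TopologicalSpace X] [CompactSpace X] [T2Space X]
  {ι : Type*} {A B : ι → Set X}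

theorem exists_isConnected_subset_iInter (hAB : IsEssentialFamily A B) (j : ι) {L : ι → Set X}
    (hL : ∀ i ≠ j, IsPartitionBetween (L i) (A i) (B i)) :
    ∃ C ⊆ ⋂ i ≠ j, L i, IsCompact C ∧ IsConnected C ∧ (A j ∩ C).Nonempty ∧ (B j ∩ C).Nonempty := by
  classical
  obtain ⟨hA, hB, hdisj, hinter⟩ := hAB
  by_contra! hno
  have hK : IsClosed (⋂ i ≠ j, L i) := isClosed_biInter fun i hi ↦ (hL i hi).1
  obtain ⟨P, Q, hP, hQ, hPQ, hPQK, hAQ, hBP⟩ :=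
    exists_isClosed_split_of_forall_isConnected_disjoint hK.isCompact (hA j) (hB j)
      fun C hCK hC hCconn hAC ↦ disjoint_iff_inter_eq_empty.2 (hno C hCK hC hCconn hAC)
  obtain ⟨M, hM, hMK⟩ := exists_isPartitionBetween_disjoint_union
    (hA j) (hB j) hP hQ (hdisj j) hPQ hAQ hBP
  rw [hPQK] at hMK
  have hupdate : ∀ i, IsPartitionBetween (Function.update L j M i) (A i) (B i) :=
    (Function.forall_update_iff L fun i S ↦ IsPartitionBetween S (A i) (B i)).2 ⟨hM, hL⟩
  obtain ⟨x, hx⟩ := hinter _ hupdate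
  rw [mem_iInter] at hx
  refine disjoint_left.1 hMK (by simpa only [Function.update_self] using hx j)
    (mem_iInter₂.2 fun i hij ↦ ?_)
  simpa only [Function.update_of_ne hij] using hx i

theorem exists_isConnected_disjoint_sUnion (hAB : IsEssentialFamily A B) {i j : ι} (hij : i ≠ j)
    {𝒩 : Set (Set X)} (hfin : 𝒩.Finite) (hclosed : ∀ N ∈ 𝒩, IsClosed N)
    (hdisj : 𝒩.PairwiseDisjoint id) (hsep : ∀ N ∈ 𝒩, (A i ∩ N).Nonempty → Disjoint (B i) N) :
    ∃ C : Set X, IsCompact C ∧ IsConnected C ∧ (A j ∩ C).Nonempty ∧ (B j ∩ C).Nonempty ∧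
      Disjoint C (⋃₀ 𝒩) := by
  classical
  have ⟨hA, hB, hABdisj, _⟩ := hAB
  choose L hL using fun k ↦ exists_isPartitionBetween (hA k) (hB k) (hABdisj k)
  obtain ⟨M, hM, hM𝒩⟩ := exists_isPartitionBetween_disjoint_sUnion (hA i) (hB i) (hABdisj i)
    hfin hclosed hdisj hsep
  have hupdate : ∀ k, IsPartitionBetween (Function.update L i M k) (A k) (B k) :=
    (Function.forall_update_iff L fun k S ↦ IsPartitionBetween S (A k) (B k)).2
      ⟨hM, fun k _ ↦ hL k⟩
  obtain ⟨C, hCL, hC, hCconn, hAC, hBC⟩ :=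
    hAB.exists_isConnected_subset_iInter j fun k _ ↦ hupdate k
  have hCM : C ⊆ M := by
    simpa only [Function.update_self] using hCL.trans (biInter_subset_of_mem hij)
  exact ⟨C, hC, hCconn, hAC, hBC, hM𝒩.mono_left hCM⟩

end IsEssentialFamily

theorem exists_large_subcontinuum_missing_small_sets_general
    {X : Type*} [MetricSpace X] [CompactSpace X] {ι : Type*} {A B : ι → Set X}
    (hAB : IsEssentialFamily A B) {i j : ι} (hij : i ≠ j) {r s : ℝ}
    (hfar_i : ∀ x ∈ A i, ∀ y ∈ B i, r < dist x y) (hfar_j : ∀ x ∈ A j, ∀ y ∈ B j, s ≤ dist x y)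
    {𝒩 : Set (Set X)} (hfin : 𝒩.Finite) (hclosed : ∀ N ∈ 𝒩, IsClosed N)
    (hsmall : ∀ N ∈ 𝒩, Metric.diam N ≤ r) (hdisj : 𝒩.PairwiseDisjoint id) :
    ∃ C : Set X, IsCompact C ∧ IsConnected C ∧ s ≤ Metric.diam C ∧ ∀ N ∈ 𝒩, Disjoint C N := by
  have hsep : ∀ N ∈ 𝒩, (A i ∩ N).Nonempty → Disjoint (B i) N := by
    rintro N hN ⟨a, haA, haN⟩
    refine disjoint_left.2 fun b hbB hbN ↦ (hfar_i a haA b hbB).not_ge ?_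
    exact (Metric.dist_le_diam_of_mem (Bornology.IsBounded.all N) haN hbN).trans (hsmall N hN)
  obtain ⟨C, hC, hCconn, ⟨a, haA, haC⟩, ⟨b, hbB, hbC⟩, hC𝒩⟩ :=
    hAB.exists_isConnected_disjoint_sUnion hij hfin hclosed hdisj hsep
  exact ⟨C, hC, hCconn,
    (hfar_j a haA b hbB).trans (Metric.dist_le_diam_of_mem hC.isBounded haC hbC),
    disjoint_sUnion_right.1 hC𝒩⟩

/-- Given an essential family of two widely separated pairs in a hereditarily
indecomposable metric continuum, every finite disjoint collection of small closed sets
misses some large subcontinuum. -/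
theorem exists_large_subcontinuum_missing_small_sets
    (X : Type*) [MetricSpace X] [CompactSpace X] [ConnectedSpace X]
    (hX : HereditarilyIndecomposable X)
    (A B : Fin 2 → Set X) (hAB : IsEssentialFamily A B)
    (hfar : ∀ i : Fin 2, ∀ x ∈ A i, ∀ y ∈ B i, 1 < dist x y)
    (𝒩 : Finset (Set X))
    (hclosed : ∀ N ∈ 𝒩, IsClosed N)
    (hsmall : ∀ N ∈ 𝒩, Metric.diam N ≤ 1 / 2)
    (hdisj : ∀ N ∈ 𝒩, ∀ M ∈ 𝒩, N ≠ M → Disjoint N M) :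
    ∃ C : Set X, IsCompact C ∧ IsConnected C ∧ 1 ≤ Metric.diam C ∧
      ∀ N ∈ 𝒩, Disjoint C N :=
  exists_large_subcontinuum_missing_small_sets_general hAB zero_ne_one (hfar 0)
    (fun x hx y hy ↦ (hfar 1 x hx y hy).le) 𝒩.finite_toSet hclosed
    (fun N hN ↦ (hsmall N hN).trans (by norm_num)) hdisj
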